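/- (Existence for the differential Lyapunov equation.) For every x ∈ D(A^*) and every t > 0, one has Q_t x ∈ D(A), the map t ↦ Q_t x is differentiable, and its derivative equals A(Q_t x) + Q_t(A^*x) + BB^*x; moreover Q_0 = 0. Thus the family (Q_t)_{t≥0} solves the differential Lyapunov equation Q'(t) = AQ(t) + Q(t)A^* + BB^*, Q(0) = 0. -/

import Mathlib

/-!
For `x ∈ D(A^*)` the orbit `r ↦ e^{rA^*}x` is continuous on `[0, ∞)` (`continuousOn_orbit`),
so `G r = e^{rA}BB^*e^{rA^*}x` is continuous there and `t ↦ Q_t x` has derivative `G t`. The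
semigroup laws and a shift of the integration variable give
`e^{hA} Q_t e^{hA^*} x = ∫_h^{t+h} G = Q_{t+h} x - Q_h x`, that is
`e^{hA} Q_t x = e^{hA} Q_t (x - e^{hA^*} x) + Q_{t+h} x - Q_h x`.
The right-hand side has right derivative `-Q_t A^* x + G t - BB^* x` at `h = 0`; hence
`Q_t x ∈ D(A)` and `A Q_t x = -Q_t A^* x + G t - BB^* x`, which is the Lyapunov equation.
Strong continuity of the adjoint semigroup on all of `X` is never needed.
-/

open MeasureTheory
open scoped RealInnerProductSpace
open Filter Topology

/-- Evaluation is jointly continuous along eventually bounded, strongly convergent operators. -/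
lemma tendsto_apply_of_bounded {ι X : Type*} [NormedAddCommGroup X] [NormedSpace ℝ X]
    {l : Filter ι} {L : ι → X →L[ℝ] X} {f : ι → X} {a b : X} {K : ℝ}
    (hK : ∀ᶠ i in l, ‖L i‖ ≤ K) (hL : Tendsto (fun i => L i a) l (𝓝 b))
    (hf : Tendsto f l (𝓝 a)) : Tendsto (fun i => L i (f i)) l (𝓝 b) := by
  have h0 : Tendsto (fun i => L i (f i - a)) l (𝓝 0) := by
    have h1 : Tendsto (fun i => K * ‖f i - a‖) l (𝓝 0) := by
      have := ((hf.sub_const a).norm).const_mul K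
      simpa using this
    refine squeeze_zero_norm' ?_ h1
    filter_upwards [hK] with i hi
    exact (L i).le_of_opNorm_le hi _
  have := h0.add hL
  simpa using this

/-- If the orbit of `x` under a bounded semigroup is right-continuous at `0`, then it is continuous
on `[0, ∞)`, because `‖S t x - S s x‖ ≤ M ‖S |t - s| x - x‖`. -/
lemma continuousOn_orbit {X : Type*} [NormedAddCommGroup X] [NormedSpace ℝ X]
    {S : ℝ → X →L[ℝ] X} {M : ℝ} (hS0 : S 0 = 1)
    (hS : ∀ s t : ℝ, 0 ≤ s → 0 ≤ t → S (s + t) = (S s).comp (S t))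
    (hM : ∀ t : ℝ, 0 ≤ t → ‖S t‖ ≤ M) {x : X}
    (hx : ContinuousWithinAt (fun t => S t x) (Set.Ici 0) 0) :
    ContinuousOn (fun t => S t x) (Set.Ici 0) := by
  have key : ∀ s t : ℝ, 0 ≤ s → s ≤ t → ‖S t x - S s x‖ ≤ M * ‖S |t - s| x - x‖ := by
    intro s t hs hst
    have h := hS s (t - s) hs (by linarith)
    rw [add_sub_cancel] at h
    rw [abs_of_nonneg (by linarith : 0 ≤ t - s), h, ContinuousLinearMap.comp_apply, ← map_sub]
    exact (S s).le_of_opNorm_le (hM s hs) _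
  intro s hs
  have hs' : (0 : ℝ) ≤ s := hs
  have habs : Tendsto (fun t : ℝ => |t - s|) (𝓝[Set.Ici 0] s) (𝓝[Set.Ici 0] 0) := by
    refine tendsto_nhdsWithin_iff.2 ⟨?_, Eventually.of_forall fun t => Set.mem_Ici.2 (abs_nonneg _)⟩
    have : Continuous fun t : ℝ => |t - s| := by fun_prop
    simpa using (this.tendsto s).mono_left nhdsWithin_le_nhds
  have h1 : Tendsto (fun t : ℝ => M * ‖S |t - s| x - x‖) (𝓝[Set.Ici 0] s) (𝓝 0) := by
    have h2 : Tendsto (fun t : ℝ => S |t - s| x) (𝓝[Set.Ici 0] s) (𝓝 (S 0 x)) :=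
      Tendsto.comp hx habs
    have := ((h2.sub_const x).norm).const_mul M
    simpa [hS0] using this
  refine tendsto_sub_nhds_zero_iff.1 (squeeze_zero_norm' ?_ h1)
  filter_upwards [self_mem_nhdsWithin] with t ht
  rcases le_total s t with h | h
  · exact key s t hs' h
  · rw [norm_sub_rev, abs_sub_comm]
    exact key t s ht h

/-- Existence for the differential Lyapunov equation: `Q_0 = 0` and, for every
`x ∈ D(A^*)` and `t > 0`, `Q_t x ∈ D(A)`, the map `t ↦ Q_t x` is differentiable at `t`
with derivative `A(Q_t x) + Q_t(A^*x) + BB^*x`. -/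
theorem stmt_6
    {X U : Type*}
    [NormedAddCommGroup X] [InnerProductSpace ℝ X] [CompleteSpace X]
    [NormedAddCommGroup U] [InnerProductSpace ℝ U] [CompleteSpace U]
    -- the strongly continuous semigroup `e^{tA}`
    (T : ℝ → X →L[ℝ] X)
    (hT0 : T 0 = 1)
    (hTsg : ∀ s t : ℝ, 0 ≤ s → 0 ≤ t → T (s + t) = (T s).comp (T t))
    (hTcont : ∀ x : X, Continuous fun t : ℝ => T t x)
    -- negative type
    (M ω : ℝ) (hM : 0 < M) (hω : 0 < ω)
    (hTnorm : ∀ t : ℝ, 0 ≤ t → ‖T t‖ ≤ M * Real.exp (-ω * t))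
    -- the control operator
    (B : U →L[ℝ] X)
    -- the generator `A` of the semigroup
    (domA : Set X) (A : X → X)
    (hdomA : ∀ x : X, x ∈ domA ↔
      ∃ y : X, HasDerivWithinAt (fun t : ℝ => T t x) y (Set.Ici 0) 0)
    (hA : ∀ x ∈ domA, HasDerivWithinAt (fun t : ℝ => T t x) (A x) (Set.Ici 0) 0)
    -- the generator `A^*` of the adjoint semigroup
    (domAs : Set X) (Astar : X → X)
    (hdomAs : ∀ x : X, x ∈ domAs ↔
      ∃ y : X, HasDerivWithinAt (fun t : ℝ => (ContinuousLinearMap.adjoint (T t)) x) y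
        (Set.Ici 0) 0)
    (hAs : ∀ x ∈ domAs, HasDerivWithinAt
      (fun t : ℝ => (ContinuousLinearMap.adjoint (T t)) x) (Astar x) (Set.Ici 0) 0)
    -- the controllability operators `Q_t`
    (Q : ℝ → X →L[ℝ] X)
    (hQ : ∀ (t : ℝ) (x : X), Q t x =
      ∫ r in Set.Ioc (0:ℝ) t,
        T r (B ((ContinuousLinearMap.adjoint B) ((ContinuousLinearMap.adjoint (T r)) x)))) :
    Q 0 = 0 ∧
    ∀ x ∈ domAs, ∀ t : ℝ, 0 < t →
      Q t x ∈ domA ∧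
      HasDerivAt (fun s : ℝ => Q s x)
        (A (Q t x) + Q t (Astar x) + B ((ContinuousLinearMap.adjoint B) x)) t := by
  refine ⟨?_, ?_⟩
  · ext x
    simp [hQ]
  intro x hx t ht
  have hTM : ∀ s : ℝ, 0 ≤ s → ‖T s‖ ≤ M := fun s hs => (hTnorm s hs).trans <| by
    have : Real.exp (-ω * s) ≤ 1 := Real.exp_le_one_iff.2 (by nlinarith)
    nlinarith
  set S : ℝ → X →L[ℝ] X := fun s => ContinuousLinearMap.adjoint (T s) with hSdef
  have hS0 : S 0 = 1 := by
    simp only [hSdef, hT0]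
    exact ContinuousLinearMap.adjoint_id
  have hSsg : ∀ s r : ℝ, 0 ≤ s → 0 ≤ r → S (s + r) = (S s).comp (S r) := by
    intro s r hs hr
    simp only [hSdef]
    rw [add_comm, hTsg r s hr hs, ContinuousLinearMap.adjoint_comp]
  have hSM : ∀ s : ℝ, 0 ≤ s → ‖S s‖ ≤ M := fun s hs => by
    simpa [hSdef] using hTM s hs
  have hSx : HasDerivWithinAt (fun s => S s x) (Astar x) (Set.Ici 0) 0 := hAs x hx
  have hScont : ContinuousOn (fun s => S s x) (Set.Ici 0) :=
    continuousOn_orbit hS0 hSsg hSM hSx.continuousWithinAt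
  set C : X →L[ℝ] X := B.comp (ContinuousLinearMap.adjoint B) with hC
  set F : ℝ → X := fun r => T r (C (S r x)) with hF
  have hFcont : ContinuousOn F (Set.Ici 0) := by
    intro s hs
    refine tendsto_apply_of_bounded (K := M) ?_
      (((hTcont (C (S s x))).tendsto s).mono_left nhdsWithin_le_nhds)
      ((C.continuous.tendsto _).comp (hScont s hs))
    filter_upwards [self_mem_nhdsWithin] with r hr using hTM r hr
  -- The integrand is extended continuously to negative times, so that the two-sided fundamental
  -- theorem of calculus applies at `0` as well.
  set G : ℝ → X := fun r => F (max r 0) with hG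
  have hGcont : Continuous G :=
    hFcont.comp_continuous (by fun_prop) fun r => le_max_right r 0
  have hGF : ∀ r, 0 ≤ r → G r = F r := fun r hr => by simp [hG, max_eq_left hr]
  set P : ℝ → X := fun s => ∫ r in (0:ℝ)..s, G r with hP
  have hPder : ∀ s, HasDerivAt P (G s) s := fun s =>
    intervalIntegral.integral_hasDerivAt_right (hGcont.intervalIntegrable _ _)
      (hGcont.stronglyMeasurableAtFilter _ _) hGcont.continuousAt
  have hQP : ∀ s, 0 ≤ s → Q s x = P s := by
    intro s hs
    simp only [hP]
    rw [hQ, intervalIntegral.integral_of_le hs]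
    exact setIntegral_congr_fun measurableSet_Ioc fun r hr => (hGF r hr.1.le).symm
  have hshift : ∀ h, 0 ≤ h → T h (Q t (S h x)) = P (t + h) - P h := by
    intro h hh
    have hfc : ContinuousOn (fun r => T r (C (S r (S h x)))) (Set.Ici 0) := by
      have hc : ContinuousOn (fun r => S r (S h x)) (Set.Ici 0) := by
        have : ContinuousOn (fun r => S (r + h) x) (Set.Ici 0) :=
          hScont.comp (by fun_prop) fun r (hr : 0 ≤ r) => add_nonneg hr hh
        refine this.congr fun r hr => ?_
        change S r (S h x) = S (r + h) x
        rw [hSsg r h hr hh]; rfl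
      intro s hs
      refine tendsto_apply_of_bounded (K := M) ?_
        (((hTcont (C (S s (S h x)))).tendsto s).mono_left nhdsWithin_le_nhds)
        ((C.continuous.tendsto _).comp (hc s hs))
      filter_upwards [self_mem_nhdsWithin] with r hr using hTM r hr
    have hint : IntegrableOn (fun r => T r (C (S r (S h x)))) (Set.Ioc 0 t) :=
      ((hfc.mono Set.Icc_subset_Ici_self).integrableOn_Icc).mono_set Set.Ioc_subset_Icc_self
    have e1 : Q t (S h x) = ∫ r in Set.Ioc 0 t, T r (C (S r (S h x))) := hQ t (S h x)
    rw [e1, ← ContinuousLinearMap.integral_comp_comm _ hint]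
    have e2 : P (t + h) - P h = ∫ r in (0:ℝ)..t, G (r + h) := by
      rw [intervalIntegral.integral_comp_add_right, zero_add]
      exact intervalIntegral.integral_interval_sub_left (hGcont.intervalIntegrable _ _)
        (hGcont.intervalIntegrable _ _)
    rw [e2, intervalIntegral.integral_of_le ht.le]
    refine setIntegral_congr_fun measurableSet_Ioc fun r hr => ?_
    have hr0 : 0 ≤ r := hr.1.le
    have eT : T (r + h) = (T h).comp (T r) := by rw [add_comm, hTsg h r hh hr0]
    simp only [hGF (r + h) (add_nonneg hr0 hh), hF]
    rw [eT, hSsg r h hr0 hh]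
    rfl
  -- The term `T h (y h)` with `y h = Q t (x - S h x)`; since `y 0 = 0`, its difference quotient
  -- at `0` is `T h` applied to that of `y`.
  have hy : HasDerivWithinAt (fun h => Q t (x - S h x)) (-(Q t (Astar x))) (Set.Ici 0) 0 := by
    have := (Q t).hasFDerivAt.comp_hasDerivWithinAt (0 : ℝ) (hSx.const_sub x)
    rw [map_neg] at this
    exact this
  have hTy : HasDerivWithinAt (fun h => T h (Q t (x - S h x))) (-(Q t (Astar x)))
      (Set.Ici 0) 0 := by
    rw [hasDerivWithinAt_iff_tendsto_slope] at hy ⊢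
    have hlim : Tendsto (fun h => T h (-(Q t (Astar x)))) (𝓝[Set.Ici 0 \ {0}] 0)
        (𝓝 (-(Q t (Astar x)))) := by
      have := ((hTcont (-(Q t (Astar x)))).tendsto 0).mono_left
        (nhdsWithin_le_nhds (s := Set.Ici (0:ℝ) \ {0}))
      simpa [hT0] using this
    refine (tendsto_apply_of_bounded (K := M) ?_ hlim hy).congr fun h => ?_
    · filter_upwards [self_mem_nhdsWithin] with r hr using hTM r hr.1
    · simp [slope_def_module, hS0]
  have hmain : HasDerivWithinAt (fun h => T h (Q t x))
      (-(Q t (Astar x)) + (G t - G 0)) (Set.Ici 0) 0 := by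
    have h1 : HasDerivAt (fun h => P (t + h)) (G t) 0 := by
      have := hPder (t + 0)
      have := HasDerivAt.comp_const_add t 0 this
      simpa using this
    refine (hTy.add (h1.sub (hPder 0)).hasDerivWithinAt).congr_of_mem (fun h hh => ?_)
      (Set.mem_Ici.2 le_rfl)
    have := hshift h hh
    simp only [Pi.add_apply, Pi.sub_apply, ← this, map_sub]
    abel
  have hmem : Q t x ∈ domA := (hdomA _).2 ⟨_, hmain⟩
  have hAQ : A (Q t x) = -(Q t (Astar x)) + (G t - G 0) :=
    (uniqueDiffWithinAt_Ici (0:ℝ)).eq_deriv _ (hA _ hmem) hmain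
  refine ⟨hmem, ?_⟩
  have hG0 : G 0 = B ((ContinuousLinearMap.adjoint B) x) := by
    simp [hG, hF, hT0, hS0, hC]
  have heq : A (Q t x) + Q t (Astar x) + B ((ContinuousLinearMap.adjoint B) x) = G t := by
    rw [hAQ, ← hG0]
    abel
  rw [heq]
  refine (hPder t).congr_of_eventuallyEq ?_
  filter_upwards [lt_mem_nhds ht] with s hs using hQP s hs.le
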